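/- Let γ[·] be a random specification on Ω = E^S such that 𝒢(γ[ξ]) ≠ ∅ for ℙ-almost every ξ, and let κ be a metastate. Then there exists a metastate κ^ex (the decomposition metastate) with the following two properties: (1) κ^ex has the same barycenter as κ, i.e. for ℙ-almost every ξ, ∫ ν(A) κ^ex[ξ](dν) = ∫ ν(A) κ[ξ](dν) for every A ∈ ℱ; and (2) for ℙ-almost every ξ, κ^ex[ξ]-almost every ν ∈ 𝒫(Ω) belongs to ex 𝒢(γ[ξ]) (i.e. the complement of ex 𝒢(γ[ξ]) is contained in a κ^ex[ξ]-null set in e(𝒫(Ω))). -/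

import Mathlib

open MeasureTheory Filter Topology
open scoped ENNReal NNReal

namespace GibbsMeta

variable {S E H : Type*}

/-- The sub-σ-algebra `ℱ_Δ` of the product σ-algebra on `Ω = E^S` generated by the
coordinate projections with indices in `Δ ⊆ S`. -/
def cylSigma (S E : Type*) [MeasurableSpace E] (Δ : Set S) : MeasurableSpace (S → E) :=
  ⨆ i ∈ Δ, MeasurableSpace.comap (fun ω : S → E => ω i) inferInstance

/-- The tail σ-algebra `𝒯 = ⋂_{Λ finite} ℱ_{Λᶜ}`. -/
def tailSigma (S E : Type*) [MeasurableSpace E] : MeasurableSpace (S → E) :=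
  ⨅ Λ : Finset S, cylSigma S E ((↑Λ : Set S)ᶜ)

/-- A specification: a family of proper, consistent probability kernels indexed by
finite volumes, with `γ_Λ(A|·)` being `ℱ_{Λᶜ}`-measurable. -/
structure IsSpecification [MeasurableSpace E]
    (γ : Finset S → (S → E) → Measure (S → E)) : Prop where
  prob : ∀ (Λ : Finset S) (ω : S → E), IsProbabilityMeasure (γ Λ ω)
  meas : ∀ (Λ : Finset S) (A : Set (S → E)), MeasurableSet A →
    Measurable[cylSigma S E ((↑Λ : Set S)ᶜ)] fun ω => γ Λ ω A
  proper : ∀ (Λ : Finset S) (A : Set (S → E)),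
    MeasurableSet[cylSigma S E ((↑Λ : Set S)ᶜ)] A →
    ∀ ω, γ Λ ω A = A.indicator (fun _ => (1 : ℝ≥0∞)) ω
  consistent : ∀ (Δ Λ : Finset S), Δ ⊆ Λ → ∀ (A : Set (S → E)), MeasurableSet A →
    ∀ ω, ∫⁻ σ, γ Δ σ A ∂(γ Λ ω) = γ Λ ω A

/-- The set `𝒢(γ)` of (probability) Gibbs measures for the specification `γ`,
i.e. solutions of the DLR equations. -/
def Gibbs [MeasurableSpace E] (γ : Finset S → (S → E) → Measure (S → E)) :
    Set (Measure (S → E)) :=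
  {μ | IsProbabilityMeasure μ ∧
    ∀ (Λ : Finset S) (A : Set (S → E)), MeasurableSet A → ∫⁻ ω, γ Λ ω A ∂μ = μ A}

/-- The set `ex 𝒢(γ)` of extreme points of the convex set `𝒢(γ)`. -/
def exGibbs [MeasurableSpace E] (γ : Finset S → (S → E) → Measure (S → E)) :
    Set (Measure (S → E)) :=
  {μ | μ ∈ Gibbs γ ∧ ∀ ν₁ ∈ Gibbs γ, ∀ ν₂ ∈ Gibbs γ, ∀ t : ℝ≥0∞, 0 < t → t < 1 →
    μ = t • ν₁ + (1 - t) • ν₂ → ν₁ = μ ∧ ν₂ = μ}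

/-- A random specification: a measurable family of specifications. -/
structure IsRandomSpecification [MeasurableSpace E] [MeasurableSpace H]
    (γ : H → Finset S → (S → E) → Measure (S → E)) : Prop where
  spec : ∀ ξ, IsSpecification (γ ξ)
  jointMeas : ∀ (Λ : Finset S) (A : Set (S → E)), MeasurableSet A →
    Measurable fun p : H × (S → E) => γ p.1 Λ p.2 A

/-- A metastate: a measurable map `κ : H → 𝒫(𝒫(Ω))` such that for `ℙ`-a.e. `ξ`,
`κ[ξ]`-almost every `ν` is a Gibbs measure for `γ[ξ]`. -/
def IsMetastate [MeasurableSpace E] [MeasurableSpace H]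
    (ℙ : Measure H) (γ : H → Finset S → (S → E) → Measure (S → E))
    (κ : H → Measure (Measure (S → E))) : Prop :=
  Measurable κ ∧ (∀ ξ, IsProbabilityMeasure (κ ξ)) ∧
  ∀ᵐ ξ ∂ℙ, ∃ N : Set (Measure (S → E)), MeasurableSet N ∧ κ ξ N = 0 ∧ (Gibbs (γ ξ))ᶜ ⊆ N

/-!
The barycenter of `κ[ξ]` is a Gibbs measure `μ[ξ]`. On the product space `H × Ω` with law
`ℙ(dξ) μ[ξ](dω)`, condition the configuration on the disorder together with the tail. This yields
a kernel that is measurable in `(ξ, ω)` at once, and `κᵉˣ[ξ]` is its law under `μ[ξ]`, whose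
barycenter is again `μ[ξ]`.

The conditional measures satisfy the DLR equations by the tower property, because `γ_Λ[ξ](A|ω)` is
a conditional probability given the disorder and the configuration outside `Λ`. For extremality,
the squares `∫ γ_Λ[ξ](A|·)²` converge along finite volumes to the square of the tail conditional
probability, by reverse martingale convergence in `L²`; hence the conditional measures `ν` satisfy
`inf_Λ ∫ γ_Λ(A|·)² dν = ν(A)²` for countably many `A`, and strict convexity of the square rules out
a nontrivial decomposition of such a `ν` into Gibbs measures.
-/

section ReverseMartingale

variable {α : Type*} {m m₁ m₂ m0 : MeasurableSpace α} {M : Measure α}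

-- The limsup of the versions does not see finitely many of them.
theorem aestronglyMeasurable_iInf {β : Type*} [ConditionallyCompleteLinearOrder β]
    [TopologicalSpace β] [OrderTopology β] [SecondCountableTopology β]
    [TopologicalSpace.PseudoMetrizableSpace β] {𝓕 : ℕ → MeasurableSpace α} (h𝓕 : Antitone 𝓕)
    {f : α → β} (hf : ∀ n, AEStronglyMeasurable[𝓕 n] f M) :
    AEStronglyMeasurable[⨅ n, 𝓕 n] f M := by
  borelize β
  choose g hg hfg using hf
  have measurable_limsup (k : ℕ) : Measurable[𝓕 k] fun x => limsup (fun n => g n x) atTop := by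
    simp only [← limsup_nat_add (fun n => g n _) k]
    exact Measurable.limsup fun n =>
      (hg (n + k)).measurable.mono (h𝓕 (Nat.le_add_left k n)) le_rfl
  refine ⟨fun x => limsup (fun n => g n x) atTop, Measurable.stronglyMeasurable fun s hs => ?_, ?_⟩
  · exact MeasurableSpace.measurableSet_iInf.2 fun k => measurable_limsup k hs
  · filter_upwards [ae_all_iff.2 hfg] with x hx
    simp only [← hx, limsup_const]

theorem lpMeas_mono (h : m₁ ≤ m₂) (F 𝕜 : Type*) [RCLike 𝕜] [NormedAddCommGroup F]
    [NormedSpace 𝕜 F] (p : ℝ≥0∞) (M : Measure α) : lpMeas F 𝕜 m₁ p M ≤ lpMeas F 𝕜 m₂ p M := by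
  intro f hf
  rw [mem_lpMeas_iff_aestronglyMeasurable] at hf ⊢
  exact hf.mono h

theorem lpMeas_iInf {𝓕 : ℕ → MeasurableSpace α} (h𝓕 : Antitone 𝓕) (p : ℝ≥0∞) (M : Measure α) :
    lpMeas ℝ ℝ (⨅ n, 𝓕 n) p M = ⨅ n, lpMeas ℝ ℝ (𝓕 n) p M := by
  refine le_antisymm (le_iInf fun n => lpMeas_mono (iInf_le 𝓕 n) ℝ ℝ p M) fun f hf => ?_
  simp only [Submodule.mem_iInf, mem_lpMeas_iff_aestronglyMeasurable] at hf ⊢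
  exact aestronglyMeasurable_iInf h𝓕 hf

theorem tendsto_starProjection_iInf {ι 𝕜 V : Type*} [Preorder ι] [RCLike 𝕜]
    [NormedAddCommGroup V] [InnerProductSpace 𝕜 V] [CompleteSpace V]
    {K : ι → Submodule 𝕜 V} [∀ i, (K i).HasOrthogonalProjection]
    [(⨅ i, K i).HasOrthogonalProjection] (hK : Antitone K) (x : V) :
    Tendsto (fun i => (K i).starProjection x) atTop (𝓝 ((⨅ i, K i).starProjection x)) := by
  have closure_iSup_orthogonal : (⨆ i, (K i)ᗮ).topologicalClosure = (⨅ i, K i)ᗮ := by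
    rw [← Submodule.orthogonal_orthogonal_eq_closure, ← Submodule.iInf_orthogonal]
    simp only [Submodule.orthogonal_orthogonal]
  have tendsto_orthogonal := Submodule.starProjection_tendsto_closure_iSup (fun i => (K i)ᗮ)
    (fun _ _ hij => Submodule.orthogonal_le (hK hij)) x
  simp only [closure_iSup_orthogonal, Submodule.starProjection_orthogonal_val] at tendsto_orthogonal
  simpa only [sub_sub_cancel] using tendsto_orthogonal.const_sub x

theorem eLpNorm_condExp_eq_enorm_starProjection [Fact (m ≤ m0)]
    [IsFiniteMeasure M] {f : α → ℝ} (hf : MemLp f 2 M) :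
    eLpNorm (M[f|m]) 2 M = ‖(lpMeas ℝ ℝ m 2 M).starProjection hf.toLp‖ₑ := by
  rw [Lp.enorm_def]
  exact eLpNorm_congr_ae (hf.condExpL2_ae_eq_condExp (𝕜 := ℝ) Fact.out).symm

theorem tendsto_eLpNorm_condExp_iInf {𝓕 : ℕ → MeasurableSpace α} (h𝓕 : Antitone 𝓕)
    (h𝓕_le : ∀ n, 𝓕 n ≤ m0) [IsFiniteMeasure M] {f : α → ℝ} (hf : MemLp f 2 M) :
    Tendsto (fun n => eLpNorm (M[f|𝓕 n]) 2 M) atTop (𝓝 (eLpNorm (M[f|⨅ n, 𝓕 n]) 2 M)) := by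
  have (n : ℕ) : Fact (𝓕 n ≤ m0) := ⟨h𝓕_le n⟩
  have : Fact ((⨅ n, 𝓕 n) ≤ m0) := ⟨iInf_le_of_le 0 (h𝓕_le 0)⟩
  have : (⨅ n, lpMeas ℝ ℝ (𝓕 n) 2 M).HasOrthogonalProjection := by
    rw [← lpMeas_iInf h𝓕]; infer_instance
  simp only [eLpNorm_condExp_eq_enorm_starProjection hf, lpMeas_iInf h𝓕]
  exact (tendsto_starProjection_iInf (fun _ _ h => lpMeas_mono (h𝓕 h) ℝ ℝ 2 M) hf.toLp).enorm

theorem lintegral_condLExp_sq {f : α → ℝ≥0∞} (hf : AEMeasurable f M)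
    (hf_fin : ∫⁻ x, f x ∂M ≠ ∞) :
    ∫⁻ x, M⁻[f|m] x ^ 2 ∂M = eLpNorm (M[fun x => (f x).toReal|m]) 2 M ^ 2 := by
  have enorm_condExp : ∀ᵐ x ∂M, ‖M[fun x => (f x).toReal|m] x‖ₑ = M⁻[f|m] x := by
    filter_upwards [toReal_condLExp m hf hf_fin, condLExp_lt_top hf_fin] with x hx hx_lt
    rw [← hx, Real.enorm_eq_ofReal ENNReal.toReal_nonneg, ENNReal.ofReal_toReal hx_lt.ne]
  rw [eLpNorm_eq_lintegral_rpow_enorm_toReal two_ne_zero ENNReal.ofNat_ne_top,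
    ← ENNReal.rpow_natCast, ← ENNReal.rpow_mul, ENNReal.toReal_ofNat, Nat.cast_ofNat,
    one_div_mul_cancel two_ne_zero, ENNReal.rpow_one]
  exact lintegral_congr_ae (enorm_condExp.mono fun x hx => by
    simp only [hx, ENNReal.rpow_ofNat])

theorem memLp_two_toReal_of_lintegral_sq_ne_top {f : α → ℝ≥0∞} (hf : AEMeasurable f M)
    (hf_sq : ∫⁻ x, f x ^ 2 ∂M ≠ ∞) : MemLp (fun x => (f x).toReal) 2 M := by
  refine ⟨hf.ennreal_toReal.aestronglyMeasurable, ?_⟩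
  rw [eLpNorm_lt_top_iff_lintegral_rpow_enorm_lt_top two_ne_zero ENNReal.ofNat_ne_top]
  refine lt_of_le_of_lt (lintegral_mono fun x => ?_) hf_sq.lt_top
  have enorm_le : ‖(f x).toReal‖ₑ ≤ f x := by
    rw [Real.enorm_eq_ofReal ENNReal.toReal_nonneg]
    exact ENNReal.ofReal_toReal_le
  simpa using ENNReal.rpow_le_rpow enorm_le zero_le_two

theorem lintegral_ne_top_of_lintegral_sq_ne_top [IsFiniteMeasure M] {f : α → ℝ≥0∞}
    (hf_sq : ∫⁻ x, f x ^ 2 ∂M ≠ ∞) : ∫⁻ x, f x ∂M ≠ ∞ := by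
  have le_one_add_sq (x : α) : f x ≤ 1 + f x ^ 2 := by
    rcases le_total (f x) 1 with h | h
    · exact le_add_right h
    · exact le_add_left (le_self_pow₀ h two_ne_zero)
  refine ((lintegral_mono le_one_add_sq).trans_lt ?_).ne
  rw [lintegral_add_left measurable_const]
  simp [hf_sq.lt_top]

theorem tendsto_lintegral_condLExp_sq_iInf {𝓕 : ℕ → MeasurableSpace α} (h𝓕 : Antitone 𝓕)
    (h𝓕_le : ∀ n, 𝓕 n ≤ m0) [IsFiniteMeasure M] {f : α → ℝ≥0∞}
    (hf : AEMeasurable f M) (hf_sq : ∫⁻ x, f x ^ 2 ∂M ≠ ∞) :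
    Tendsto (fun n => ∫⁻ x, M⁻[f|𝓕 n] x ^ 2 ∂M) atTop (𝓝 (∫⁻ x, M⁻[f|⨅ n, 𝓕 n] x ^ 2 ∂M)) := by
  simp only [lintegral_condLExp_sq hf (lintegral_ne_top_of_lintegral_sq_ne_top hf_sq)]
  exact ((ENNReal.continuous_pow 2).tendsto _).comp
    (tendsto_eLpNorm_condExp_iInf h𝓕 h𝓕_le (memLp_two_toReal_of_lintegral_sq_ne_top hf hf_sq))

end ReverseMartingale

section Convexity

theorem sq_lintegral_le_lintegral_sq {α : Type*} [MeasurableSpace α] {ν : Measure α}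
    [IsProbabilityMeasure ν] {f : α → ℝ≥0∞} (hf : AEMeasurable f ν) :
    (∫⁻ x, f x ∂ν) ^ 2 ≤ ∫⁻ x, f x ^ 2 ∂ν := by
  have holder : ∫⁻ x, f x ∂ν ≤ (∫⁻ x, f x ^ 2 ∂ν) ^ (2⁻¹ : ℝ) := by
    simpa using ENNReal.lintegral_mul_le_Lp_mul_Lq ν Real.HolderConjugate.two_two hf
      (aemeasurable_const (b := (1 : ℝ≥0∞)))
  calc (∫⁻ x, f x ∂ν) ^ 2 ≤ ((∫⁻ x, f x ^ 2 ∂ν) ^ (2⁻¹ : ℝ)) ^ 2 := by gcongr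
    _ = ∫⁻ x, f x ^ 2 ∂ν := by
      rw [← ENNReal.rpow_natCast, ← ENNReal.rpow_mul]; norm_num

theorem eq_of_convexComb_sq_le_sq_convexComb {t a b : ℝ≥0∞} (ht : 0 < t) (ht1 : t < 1)
    (ha : a ≠ ∞) (hb : b ≠ ∞)
    (h : t * a ^ 2 + (1 - t) * b ^ 2 ≤ (t * a + (1 - t) * b) ^ 2) : a = b := by
  lift t to ℝ≥0 using ht1.ne_top
  lift a to ℝ≥0 using ha
  lift b to ℝ≥0 using hb
  norm_cast at *
  rw [← NNReal.coe_le_coe] at h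
  push_cast [NNReal.coe_sub ht1.le] at h
  have variance_nonpos : (t : ℝ) * (1 - t) * ((a : ℝ) - b) ^ 2 ≤ 0 := by linarith
  have weight_pos : 0 < (t : ℝ) * (1 - t) := mul_pos ht (sub_pos.2 ht1)
  have : ((a : ℝ) - b) ^ 2 = 0 :=
    le_antisymm (nonpos_of_mul_nonpos_right variance_nonpos weight_pos) (sq_nonneg _)
  exact_mod_cast sub_eq_zero.1 (pow_eq_zero_iff two_ne_zero |>.1 this)

end Convexity

section ConditionalDistribution

open ProbabilityTheory

variable {α β Ω : Type*} {m m₁ m₂ m0 : MeasurableSpace α} [mβ : MeasurableSpace β]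
  [MeasurableSpace Ω] [StandardBorelSpace Ω] [Nonempty Ω] {M : Measure α} {X : α → β} {Y : α → Ω}

theorem condLExp_condLExp_of_le (h₁₂ : m₁ ≤ m₂) (h₂ : m₂ ≤ m0)
    [SigmaFinite (M.trim (h₁₂.trans h₂))] (f : α → ℝ≥0∞) :
    M⁻[M⁻[f|m₂]|m₁] =ᵐ[M] M⁻[f|m₁] := by
  have : SigmaFinite (M.trim h₂) := sigmaFiniteTrim_mono h₂ h₁₂
  refine ae_eq_condLExp (h₁₂.trans h₂) M f (measurable_condLExp m₁ M _) fun s hs => ?_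
  rw [setLIntegral_condLExp (h₁₂.trans h₂) M _ hs, setLIntegral_condLExp h₂ M f (h₁₂ s hs)]

theorem lintegral_condDistrib_ae_eq_condLExp [IsFiniteMeasure M] (hX : Measurable X)
    (hY : AEMeasurable Y M) {F : β × Ω → ℝ≥0∞} (hF : Measurable F) :
    (fun a => ∫⁻ y, F (X a, y) ∂(condDistrib Y X M (X a)))
      =ᵐ[M] M⁻[fun a => F (X a, Y a)|mβ.comap X] := by
  have hFint : Measurable fun b => ∫⁻ y, F (b, y) ∂(condDistrib Y X M b) :=
    hF.lintegral_kernel_prod_right'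
  refine ae_eq_condLExp hX.comap_le M _ (hFint.comp (comap_measurable X)) ?_
  rintro _ ⟨s, hs, rfl⟩
  calc ∫⁻ a in X ⁻¹' s, ∫⁻ y, F (X a, y) ∂(condDistrib Y X M (X a)) ∂M
      = ∫⁻ b in s, ∫⁻ y, F (b, y) ∂(condDistrib Y X M b) ∂(M.map X) :=
        (setLIntegral_map hs hFint hX).symm
    _ = ∫⁻ p in s ×ˢ Set.univ, F p ∂(M.map fun a => (X a, Y a)) := by
        rw [← compProd_map_condDistrib hY, Measure.setLIntegral_compProd hF hs .univ]
        simp only [Measure.restrict_univ]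
    _ = ∫⁻ a in X ⁻¹' s, F (X a, Y a) ∂M := by
        have hXY : AEMeasurable (fun a => (X a, Y a)) M := hX.aemeasurable.prodMk hY
        rw [Measure.restrict_map_of_aemeasurable hXY (hs.prod .univ),
          lintegral_map' hF.aemeasurable hXY.restrict, Set.mk_preimage_prod, Set.preimage_univ,
          Set.inter_univ]

/-- A regular conditional distribution of `Y` given a sub-σ-algebra `m`, as an `m`-measurable
kernel. Unlike `condExpKernel`, it only asks the target of `Y` to be standard Borel. The
conditioning variable is the identity, viewed as a map onto `α` equipped with `m`. -/
noncomputable def condDistribGiven (m : MeasurableSpace α) (M : Measure[m0] α)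
    [IsFiniteMeasure M] (Y : α → Ω) : Kernel[m] α Ω :=
  @condDistrib α α Ω _ _ _ m0 m Y id M _

instance [IsFiniteMeasure M] : IsMarkovKernel (condDistribGiven m M Y) :=
  inferInstanceAs (IsMarkovKernel (@condDistrib α α Ω _ _ _ m0 m Y id M _))

theorem lintegral_condDistribGiven_ae_eq_condLExp [IsFiniteMeasure M] (hm : m ≤ m0)
    (hY : AEMeasurable Y M) {F : α × Ω → ℝ≥0∞} (hF : Measurable[m.prod inferInstance] F) :
    (fun a => ∫⁻ y, F (a, y) ∂(condDistribGiven m M Y a)) =ᵐ[M] M⁻[fun a => F (a, Y a)|m] := by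
  simpa only [MeasurableSpace.comap_id, id_eq, condDistribGiven] using
    @lintegral_condDistrib_ae_eq_condLExp α α Ω m0 m _ _ _ M id Y _ (measurable_id'' hm) hY F hF

theorem condDistribGiven_apply_ae_eq_condLExp [IsFiniteMeasure M] (hm : m ≤ m0)
    (hY : AEMeasurable Y M) {A : Set Ω} (hA : MeasurableSet A) :
    (fun a => condDistribGiven m M Y a A) =ᵐ[M] M⁻[(Y ⁻¹' A).indicator 1|m] := by
  have := lintegral_condDistribGiven_ae_eq_condLExp hm hY
    (F := fun p => A.indicator 1 p.2) ((measurable_one.indicator hA).comp (@measurable_snd _ _ m _))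
  simp only [lintegral_indicator_one hA] at this
  exact this

end ConditionalDistribution

section SigmaAlgebras

theorem cylSigma_le [MeasurableSpace E] (Δ : Set S) : cylSigma S E Δ ≤ MeasurableSpace.pi :=
  iSup₂_le fun i _ => (measurable_pi_apply i).comap_le

theorem cylSigma_mono [MeasurableSpace E] : Monotone (cylSigma S E) :=
  fun _ _ h => biSup_mono fun _ hi => h hi

theorem antitone_cylSigma_compl [MeasurableSpace E] :
    Antitone fun Λ : Finset S => cylSigma S E (Λ : Set S)ᶜ :=
  fun _ _ h => cylSigma_mono (Set.compl_subset_compl.2 (Finset.coe_subset.2 h))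

theorem tailSigma_eq_iInf [MeasurableSpace E] {ι : Type*} {l : Filter ι} [l.NeBot]
    {Λ : ι → Finset S} (hΛ : Tendsto Λ l atTop) :
    tailSigma S E = ⨅ i, cylSigma S E (Λ i : Set S)ᶜ :=
  (antitone_cylSigma_compl.iInf_comp_tendsto_atTop hΛ).symm

variable {Ω : Type*} [MeasurableSpace H] {m mΩ : MeasurableSpace Ω}

/-- The jointly measurable subsets of `H × Ω` all of whose sections over `H` belong to `m`. For
`m = ℱ_{Λᶜ}` it carries the disorder and the configuration outside `Λ`. It can be strictly larger
than the product of the σ-algebra of `H` with `m`, but commutes with infima in `m`. -/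
abbrev fiberSigma (H : Type*) {Ω : Type*} [mH : MeasurableSpace H] [mΩ : MeasurableSpace Ω]
    (m : MeasurableSpace Ω) : MeasurableSpace (H × Ω) :=
  mH.prod mΩ ⊓ ⨅ ξ : H, m.map (Prod.mk ξ)

theorem measurableSet_fiberSigma_iff {B : Set (H × Ω)} :
    MeasurableSet[fiberSigma H m] B ↔
      MeasurableSet B ∧ ∀ ξ, MeasurableSet[m] (Prod.mk ξ ⁻¹' B) := by
  rw [fiberSigma, MeasurableSpace.measurableSet_inf, MeasurableSpace.measurableSet_iInf]
  rfl

theorem fiberSigma_le : fiberSigma H m ≤ (inferInstance : MeasurableSpace (H × Ω)) :=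
  inf_le_left

theorem fiberSigma_mono : Monotone (fiberSigma H (mΩ := mΩ)) :=
  fun _ _ h => inf_le_inf_left _ (iInf_mono fun _ => MeasurableSpace.map_mono h)

theorem fiberSigma_iInf {ι : Type*} [Nonempty ι] (𝓕 : ι → MeasurableSpace Ω) :
    fiberSigma H (⨅ i, 𝓕 i) = ⨅ i, fiberSigma H (𝓕 i) := by
  ext B
  simp only [measurableSet_fiberSigma_iff, MeasurableSpace.measurableSet_iInf, forall_and,
    forall_const]
  exact and_congr_right fun _ => forall_comm

theorem measurable_fst_fiberSigma : Measurable[fiberSigma H m] (Prod.fst : H × Ω → H) :=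
  fun s hs => measurableSet_fiberSigma_iff.2
    ⟨measurable_fst hs, fun ξ => @MeasurableSet.const _ m (ξ ∈ s)⟩

end SigmaAlgebras

section Measures

theorem exists_countable_isPiSystem_generateFrom (Ω : Type*) [mΩ : MeasurableSpace Ω]
    [MeasurableSpace.CountablyGenerated Ω] :
    ∃ C : Set (Set Ω), C.Countable ∧ IsPiSystem C ∧ mΩ = MeasurableSpace.generateFrom C :=
  ⟨generateSetAlgebra (MeasurableSpace.countableGeneratingSet Ω),
    countable_generateSetAlgebra (MeasurableSpace.countable_countableGeneratingSet),
    isSetAlgebra_generateSetAlgebra.isSetRing.isSetSemiring.isPiSystem, by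
    rw [generateFrom_generateSetAlgebra_eq, MeasurableSpace.generateFrom_countableGeneratingSet]⟩

theorem exists_measurableSet_null_compl_subset_iff {α : Type*} [MeasurableSpace α]
    {ν : Measure α} {s : Set α} :
    (∃ N, MeasurableSet N ∧ ν N = 0 ∧ sᶜ ⊆ N) ↔ ∀ᵐ x ∂ν, x ∈ s :=
  ⟨fun ⟨_, _, hN, hsN⟩ => measure_mono_null hsN hN, fun h =>
    ⟨toMeasurable ν sᶜ, measurableSet_toMeasurable _ _, (measure_toMeasurable sᶜ).trans h,
      subset_toMeasurable _ _⟩⟩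

theorem lintegral_sq_ne_top_of_le_one {α : Type*} [MeasurableSpace α] {M : Measure α}
    [IsFiniteMeasure M] {f : α → ℝ≥0∞} (hf : ∀ x, f x ≤ 1) : ∫⁻ x, f x ^ 2 ∂M ≠ ∞ := by
  refine ((lintegral_mono (g := 1) fun x => pow_le_one₀ zero_le (hf x)).trans_lt ?_).ne
  simp only [Pi.one_apply, lintegral_one, measure_lt_top]

theorem exists_isMarkovKernel_ae_eq {α Ω : Type*} [MeasurableSpace α] [MeasurableSpace Ω]
    [Nonempty Ω] {P : Measure α} {κ : α → Measure Ω} (hκ : AEMeasurable κ P)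
    (hκ_prob : ∀ᵐ x ∂P, IsProbabilityMeasure (κ x)) :
    ∃ μ : ProbabilityTheory.Kernel α Ω, ProbabilityTheory.IsMarkovKernel μ ∧ κ =ᵐ[P] μ := by
  obtain ⟨ω⟩ := ‹Nonempty Ω›
  obtain ⟨g, hg, hg_prob, hκg⟩ := hκ.exists_ae_eq_range_subset
    (t := {ν | IsProbabilityMeasure ν}) hκ_prob
    ⟨Measure.dirac ω, Measure.dirac.isProbabilityMeasure⟩
  exact ⟨⟨g, hg⟩, ⟨fun x => hg_prob ⟨x, rfl⟩⟩, hκg⟩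

end Measures

section Gibbs

variable [MeasurableSpace E] {γ : Finset S → (S → E) → Measure (S → E)} {C : Set (Set (S → E))}
  {ν : Measure (S → E)} {A B : Set (S → E)}

theorem IsSpecification.measurable_apply (hγ : IsSpecification γ) (Λ : Finset S)
    (hA : MeasurableSet A) : Measurable fun ω => γ Λ ω A :=
  (hγ.meas Λ A hA).mono (cylSigma_le _) le_rfl

theorem IsSpecification.measurable (hγ : IsSpecification γ) (Λ : Finset S) : Measurable (γ Λ) :=
  Measure.measurable_of_measurable_coe _ fun _ => hγ.measurable_apply Λ

theorem IsSpecification.apply_inter (hγ : IsSpecification γ) {Λ : Finset S}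
    (hB : MeasurableSet[cylSigma S E (Λ : Set S)ᶜ] B) (A : Set (S → E)) (ω : S → E) :
    γ Λ ω (A ∩ B) = B.indicator (fun ω => γ Λ ω A) ω := by
  have := hγ.prob Λ ω
  have apply_B := hγ.proper Λ B hB ω
  by_cases hω : ω ∈ B
  · rw [Set.indicator_of_mem hω] at apply_B ⊢
    exact measure_inter_conull ((prob_compl_eq_zero_iff (cylSigma_le _ B hB)).2 apply_B)
  · rw [Set.indicator_of_notMem hω] at apply_B ⊢
    exact measure_mono_null Set.inter_subset_right apply_B

theorem mem_Gibbs_iff_of_isPiSystem (hγ : IsSpecification γ)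
    (hgen : MeasurableSpace.pi = MeasurableSpace.generateFrom C) (hC : IsPiSystem C) :
    ν ∈ Gibbs γ ↔ ν Set.univ = 1 ∧ ∀ Λ, ∀ A ∈ C, ∫⁻ ω, γ Λ ω A ∂ν = ν A := by
  have measurableSet_of_mem {A} (hA : A ∈ C) : MeasurableSet A :=
    hgen ▸ MeasurableSpace.measurableSet_generateFrom hA
  refine ⟨fun ⟨hν, h⟩ => ⟨hν.measure_univ, fun Λ A hA => h Λ A (measurableSet_of_mem hA)⟩,
    fun ⟨hν, h⟩ => ⟨⟨hν⟩, fun Λ A hA => ?_⟩⟩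
  have : IsProbabilityMeasure ν := ⟨hν⟩
  have := hγ.prob Λ
  have bind_apply {A} (hA : MeasurableSet A) : ν.bind (γ Λ) A = ∫⁻ ω, γ Λ ω A ∂ν :=
    Measure.bind_apply hA (hγ.measurable Λ).aemeasurable
  have eq_bind : ν = ν.bind (γ Λ) := ext_of_generate_finite C hgen hC
    (fun A hA => by rw [bind_apply (measurableSet_of_mem hA), h Λ A hA])
    (by simp [bind_apply MeasurableSet.univ])
  rw [← bind_apply hA, ← eq_bind]

theorem measurableSet_Gibbs [Countable S] [MeasurableSpace.CountablyGenerated (S → E)]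
    (hγ : IsSpecification γ) : MeasurableSet (Gibbs γ) := by
  obtain ⟨C, hC_countable, hC, hgen⟩ := exists_countable_isPiSystem_generateFrom (S → E)
  have Gibbs_eq : Gibbs γ = {ν | ν Set.univ = 1} ∩
      ⋂ Λ, ⋂ A ∈ C, {ν | ∫⁻ ω, γ Λ ω A ∂ν = ν A} := by
    ext ν
    simp only [mem_Gibbs_iff_of_isPiSystem hγ hgen hC, Set.mem_inter_iff, Set.mem_ofPred_eq,
      Set.mem_iInter]
  rw [Gibbs_eq]
  refine (measurableSet_eq_fun (Measure.measurable_coe .univ) measurable_const).inter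
    (.iInter fun Λ => .biInter hC_countable fun A hA => ?_)
  have hA : MeasurableSet A := hgen ▸ MeasurableSpace.measurableSet_generateFrom hA
  exact measurableSet_eq_fun (Measure.measurable_lintegral (hγ.measurable_apply Λ hA))
    (Measure.measurable_coe hA)

theorem join_mem_Gibbs (hγ : IsSpecification γ) {κ : Measure (Measure (S → E))}
    [IsProbabilityMeasure κ] (hκ : ∀ᵐ ν ∂κ, ν ∈ Gibbs γ) : κ.join ∈ Gibbs γ := by
  refine ⟨⟨?_⟩, fun Λ A hA => ?_⟩
  · rw [Measure.join_apply .univ, lintegral_congr_ae (hκ.mono fun ν hν => hν.1.measure_univ),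
      lintegral_one, measure_univ]
  · rw [Measure.lintegral_join (hγ.measurable_apply Λ hA).aemeasurable, Measure.join_apply hA]
    exact lintegral_congr_ae (hκ.mono fun ν hν => hν.2 Λ A hA)

theorem sq_apply_le_lintegral_sq_of_mem_Gibbs (hγ : IsSpecification γ) (hν : ν ∈ Gibbs γ)
    (Λ : Finset S) (hA : MeasurableSet A) : ν A ^ 2 ≤ ∫⁻ ω, γ Λ ω A ^ 2 ∂ν := by
  have := hν.1
  rw [← hν.2 Λ A hA]
  exact sq_lintegral_le_lintegral_sq (hγ.measurable_apply Λ hA).aemeasurable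

/-- The Gibbs measures `ν` with `inf_Λ ∫ γ_Λ(A|·)² dν ≤ ν(A)²` for all `A ∈ C`. By reverse
martingale convergence the infimum is `∫ ν(A|𝒯)² dν`, so the condition says that `ν(A|𝒯)` has
variance zero: it expresses tail triviality on `C` in a form that is measurable in `ν`. -/
def tailTrivialGibbs (γ : Finset S → (S → E) → Measure (S → E)) (C : Set (Set (S → E))) :
    Set (Measure (S → E)) :=
  {ν ∈ Gibbs γ | ∀ A ∈ C, ⨅ Λ, ∫⁻ ω, γ Λ ω A ^ 2 ∂ν ≤ ν A ^ 2}

theorem measurableSet_tailTrivialGibbs [Countable S]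
    [MeasurableSpace.CountablyGenerated (S → E)] (hγ : IsSpecification γ) (hC : C.Countable)
    (hC_meas : ∀ A ∈ C, MeasurableSet A) : MeasurableSet (tailTrivialGibbs γ C) := by
  have tailTrivialGibbs_eq : tailTrivialGibbs γ C =
      Gibbs γ ∩ ⋂ A ∈ C, {ν | ⨅ Λ, ∫⁻ ω, γ Λ ω A ^ 2 ∂ν ≤ ν A ^ 2} := by
    ext ν
    simp only [tailTrivialGibbs, Set.mem_inter_iff, Set.mem_ofPred_eq, Set.mem_iInter]
  rw [tailTrivialGibbs_eq]
  refine (measurableSet_Gibbs hγ).inter (.biInter hC fun A hA => measurableSet_le ?_ ?_)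
  · exact .iInf fun Λ =>
      Measure.measurable_lintegral ((hγ.measurable_apply Λ (hC_meas A hA)).pow_const 2)
  · exact (Measure.measurable_coe (hC_meas A hA)).pow_const 2

-- Jensen gives `ν₁(A)² ≤ ∫ γ_Λ(A|·)² dν₁` for every `Λ`, hence `t ν₁(A)² + (1 - t) ν₂(A)² ≤ ν(A)²`
-- for `ν = t ν₁ + (1 - t) ν₂`, and strict convexity of the square forces `ν₁(A) = ν₂(A)`.
theorem eq_of_convexComb_mem_tailTrivialGibbs (hγ : IsSpecification γ)
    (hgen : MeasurableSpace.pi = MeasurableSpace.generateFrom C) (hC : IsPiSystem C)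
    {ν₁ ν₂ : Measure (S → E)} (hν₁ : ν₁ ∈ Gibbs γ) (hν₂ : ν₂ ∈ Gibbs γ) {t : ℝ≥0∞} (ht : 0 < t)
    (ht1 : t < 1) (h : t • ν₁ + (1 - t) • ν₂ ∈ tailTrivialGibbs γ C) : ν₁ = ν₂ := by
  have := hν₁.1
  have := hν₂.1
  refine ext_of_generate_finite C hgen hC (fun A hA => ?_) (by simp only [measure_univ])
  have hA_meas : MeasurableSet A := hgen ▸ MeasurableSpace.measurableSet_generateFrom hA
  refine eq_of_convexComb_sq_le_sq_convexComb ht ht1 (measure_ne_top _ _) (measure_ne_top _ _) ?_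
  calc t * ν₁ A ^ 2 + (1 - t) * ν₂ A ^ 2
      ≤ ⨅ Λ, ∫⁻ ω, γ Λ ω A ^ 2 ∂(t • ν₁ + (1 - t) • ν₂) := le_iInf fun Λ => by
        rw [lintegral_add_measure, lintegral_smul_measure, lintegral_smul_measure]
        simp only [smul_eq_mul]
        gcongr
        · exact sq_apply_le_lintegral_sq_of_mem_Gibbs hγ hν₁ Λ hA_meas
        · exact sq_apply_le_lintegral_sq_of_mem_Gibbs hγ hν₂ Λ hA_meas
    _ ≤ (t * ν₁ A + (1 - t) * ν₂ A) ^ 2 := h.2 A hA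

theorem tailTrivialGibbs_subset_exGibbs (hγ : IsSpecification γ)
    (hgen : MeasurableSpace.pi = MeasurableSpace.generateFrom C) (hC : IsPiSystem C) :
    tailTrivialGibbs γ C ⊆ exGibbs γ := by
  refine fun ν hν => ⟨hν.1, ?_⟩
  rintro ν₁ hν₁ ν₂ hν₂ t ht ht1 rfl
  obtain rfl := eq_of_convexComb_mem_tailTrivialGibbs hγ hgen hC hν₁ hν₂ ht ht1 hν
  rw [← add_smul, add_tsub_cancel_of_le ht1.le, one_smul]
  exact ⟨rfl, rfl⟩

end Gibbs

section RandomSpecification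

open ProbabilityTheory

variable [MeasurableSpace E] [MeasurableSpace H]
  {γ : H → Finset S → (S → E) → Measure (S → E)} {P : Measure H} [IsFiniteMeasure P]
  {μ : Kernel H (S → E)} [IsFiniteKernel μ] {A : Set (S → E)} {C : Set (Set (S → E))}

theorem IsRandomSpecification.measurable_fiberSigma (hγ : IsRandomSpecification γ) (Λ : Finset S)
    (hA : MeasurableSet A) :
    Measurable[fiberSigma H (cylSigma S E (Λ : Set S)ᶜ)] fun x => γ x.1 Λ x.2 A := fun _ hs =>
  measurableSet_fiberSigma_iff.2
    ⟨hγ.jointMeas Λ A hA hs, fun ξ => (hγ.spec ξ).meas Λ A hA hs⟩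

theorem IsRandomSpecification.apply_ae_eq_condLExp (hγ : IsRandomSpecification γ)
    (hμ : ∀ᵐ ξ ∂P, μ ξ ∈ Gibbs (γ ξ)) (Λ : Finset S) (hA : MeasurableSet A) :
    (fun x => γ x.1 Λ x.2 A) =ᵐ[P ⊗ₘ μ]
      (P ⊗ₘ μ)⁻[(Prod.snd ⁻¹' A).indicator 1|fiberSigma H (cylSigma S E (Λ : Set S)ᶜ)] := by
  refine ae_eq_condLExp fiberSigma_le _ _ (hγ.measurable_fiberSigma Λ hA) fun B hB => ?_
  obtain ⟨hB_meas, hB_sec⟩ := measurableSet_fiberSigma_iff.1 hB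
  rw [lintegral_indicator_one (measurable_snd hA), Measure.restrict_apply (measurable_snd hA),
    ← lintegral_indicator hB_meas, Measure.compProd_apply ((measurable_snd hA).inter hB_meas),
    Measure.lintegral_compProd ((hγ.jointMeas Λ A hA).indicator hB_meas)]
  refine lintegral_congr_ae (hμ.mono fun ξ hξ => ?_)
  calc ∫⁻ ω, B.indicator (fun x => γ x.1 Λ x.2 A) (ξ, ω) ∂μ ξ
      = ∫⁻ ω, γ ξ Λ ω (A ∩ Prod.mk ξ ⁻¹' B) ∂μ ξ :=
        lintegral_congr fun ω => ((hγ.spec ξ).apply_inter (hB_sec ξ) A ω).symm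
    _ = μ ξ (Prod.mk ξ ⁻¹' (Prod.snd ⁻¹' A ∩ B)) :=
        hξ.2 Λ _ (hA.inter (measurable_prodMk_left hB_meas))

variable [Countable S] [StandardBorelSpace E] [Nonempty (S → E)]

/-- The conditional distribution of the configuration given the disorder and the tail, under the
joint law `P ⊗ₘ μ`. Conditioning on the product space makes it jointly measurable in both
arguments. -/
noncomputable def tailKernel (P : Measure H) [IsFiniteMeasure P] (μ : Kernel H (S → E))
    [IsFiniteKernel μ] : Kernel (H × (S → E)) (S → E) :=
  (condDistribGiven (fiberSigma H (tailSigma S E)) (P ⊗ₘ μ) Prod.snd).comap id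
    (measurable_id'' fiberSigma_le)

instance : IsMarkovKernel (tailKernel P μ) :=
  inferInstanceAs (IsMarkovKernel (Kernel.comap _ _ _))

theorem lintegral_tailKernel_ae_eq_condLExp {G : H × (S → E) → ℝ≥0∞} (hG : Measurable G) :
    (fun x => ∫⁻ ω, G (x.1, ω) ∂tailKernel P μ x) =ᵐ[P ⊗ₘ μ]
      (P ⊗ₘ μ)⁻[G|fiberSigma H (tailSigma S E)] := by
  let tail := fiberSigma H (tailSigma S E)
  have hF : Measurable[tail.prod inferInstance]
      fun p : (H × (S → E)) × (S → E) => G (p.1.1, p.2) :=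
    hG.comp ((measurable_fst_fiberSigma.comp (@measurable_fst _ _ tail _)).prodMk
      (@measurable_snd _ _ tail _))
  exact lintegral_condDistribGiven_ae_eq_condLExp fiberSigma_le measurable_snd.aemeasurable hF

theorem tailKernel_apply_ae_eq_condLExp (hA : MeasurableSet A) :
    (fun x => tailKernel P μ x A) =ᵐ[P ⊗ₘ μ]
      (P ⊗ₘ μ)⁻[(Prod.snd ⁻¹' A).indicator 1|fiberSigma H (tailSigma S E)] :=
  condDistribGiven_apply_ae_eq_condLExp fiberSigma_le measurable_snd.aemeasurable hA

theorem lintegral_lintegral_tailKernel {G : H × (S → E) → ℝ≥0∞} (hG : Measurable G) :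
    ∫⁻ x, ∫⁻ ω, G (x.1, ω) ∂tailKernel P μ x ∂(P ⊗ₘ μ) = ∫⁻ x, G x ∂(P ⊗ₘ μ) := by
  rw [lintegral_congr_ae (lintegral_tailKernel_ae_eq_condLExp hG),
    lintegral_condLExp fiberSigma_le]

theorem ae_lintegral_tailKernel_eq (hγ : IsRandomSpecification γ)
    (hμ : ∀ᵐ ξ ∂P, μ ξ ∈ Gibbs (γ ξ)) (Λ : Finset S) (hA : MeasurableSet A) :
    ∀ᵐ x ∂(P ⊗ₘ μ), ∫⁻ ω, γ x.1 Λ ω A ∂tailKernel P μ x = tailKernel P μ x A := by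
  have tail_le : fiberSigma H (tailSigma S E) ≤ fiberSigma H (cylSigma S E (Λ : Set S)ᶜ) :=
    fiberSigma_mono (iInf_le _ Λ)
  calc (fun x => ∫⁻ ω, γ x.1 Λ ω A ∂tailKernel P μ x)
      =ᵐ[P ⊗ₘ μ] (P ⊗ₘ μ)⁻[fun x => γ x.1 Λ x.2 A|fiberSigma H (tailSigma S E)] :=
        lintegral_tailKernel_ae_eq_condLExp (hγ.jointMeas Λ A hA)
    _ =ᵐ[P ⊗ₘ μ] (P ⊗ₘ μ)⁻[(P ⊗ₘ μ)⁻[(Prod.snd ⁻¹' A).indicator 1|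
          fiberSigma H (cylSigma S E (Λ : Set S)ᶜ)]|fiberSigma H (tailSigma S E)] :=
        condLExp_congr_ae (hγ.apply_ae_eq_condLExp hμ Λ hA)
    _ =ᵐ[P ⊗ₘ μ] (P ⊗ₘ μ)⁻[(Prod.snd ⁻¹' A).indicator 1|fiberSigma H (tailSigma S E)] :=
        condLExp_condLExp_of_le tail_le fiberSigma_le _
    _ =ᵐ[P ⊗ₘ μ] fun x => tailKernel P μ x A := (tailKernel_apply_ae_eq_condLExp hA).symm

theorem ae_tailKernel_mem_Gibbs (hγ : IsRandomSpecification γ)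
    (hμ : ∀ᵐ ξ ∂P, μ ξ ∈ Gibbs (γ ξ)) :
    ∀ᵐ x ∂(P ⊗ₘ μ), tailKernel P μ x ∈ Gibbs (γ x.1) := by
  obtain ⟨C, hC_countable, hC, hgen⟩ := exists_countable_isPiSystem_generateFrom (S → E)
  have dlr : ∀ᵐ x ∂(P ⊗ₘ μ), ∀ Λ, ∀ A ∈ C,
      ∫⁻ ω, γ x.1 Λ ω A ∂tailKernel P μ x = tailKernel P μ x A :=
    ae_all_iff.2 fun Λ => (ae_ball_iff hC_countable).2 fun A hA =>
      ae_lintegral_tailKernel_eq hγ hμ Λ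
        (hgen ▸ MeasurableSpace.measurableSet_generateFrom hA)
  filter_upwards [dlr] with x hx
  exact (mem_Gibbs_iff_of_isPiSystem (hγ.spec x.1) hgen hC).2 ⟨measure_univ, hx⟩

theorem iInf_lintegral_sq_le_lintegral_tailKernel_sq (hγ : IsRandomSpecification γ)
    (hμ : ∀ᵐ ξ ∂P, μ ξ ∈ Gibbs (γ ξ)) (hA : MeasurableSet A) :
    ⨅ Λ, ∫⁻ x, γ x.1 Λ x.2 A ^ 2 ∂(P ⊗ₘ μ) ≤ ∫⁻ x, tailKernel P μ x A ^ 2 ∂(P ⊗ₘ μ) := by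
  obtain ⟨Λ, hΛ_mono, hΛ⟩ := exists_seq_monotone_tendsto_atTop_atTop (Finset S)
  let 𝓕 (n : ℕ) : MeasurableSpace (H × (S → E)) := fiberSigma H (cylSigma S E (Λ n : Set S)ᶜ)
  have h𝓕 : Antitone 𝓕 := fun _ _ h => fiberSigma_mono (antitone_cylSigma_compl (hΛ_mono h))
  have iInf_𝓕 : ⨅ n, 𝓕 n = fiberSigma H (tailSigma S E) := by
    rw [tailSigma_eq_iInf hΛ, fiberSigma_iInf]
  have lintegral_γ_sq (n : ℕ) : ∫⁻ x, (P ⊗ₘ μ)⁻[(Prod.snd ⁻¹' A).indicator 1|𝓕 n] x ^ 2 ∂(P ⊗ₘ μ)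
      = ∫⁻ x, γ x.1 (Λ n) x.2 A ^ 2 ∂(P ⊗ₘ μ) :=
    lintegral_congr_ae ((hγ.apply_ae_eq_condLExp hμ (Λ n) hA).symm.fun_comp (· ^ 2))
  have lintegral_tail_sq : ∫⁻ x, (P ⊗ₘ μ)⁻[(Prod.snd ⁻¹' A).indicator 1|⨅ n, 𝓕 n] x ^ 2 ∂(P ⊗ₘ μ)
      = ∫⁻ x, tailKernel P μ x A ^ 2 ∂(P ⊗ₘ μ) := by
    rw [iInf_𝓕]
    exact lintegral_congr_ae ((tailKernel_apply_ae_eq_condLExp hA).symm.fun_comp (· ^ 2))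
  have := tendsto_lintegral_condLExp_sq_iInf h𝓕 (fun n => fiberSigma_le) (M := P ⊗ₘ μ)
    (f := (Prod.snd ⁻¹' A).indicator 1)
    (measurable_one.indicator (measurable_snd hA)).aemeasurable
    (lintegral_sq_ne_top_of_le_one fun _ => Set.indicator_le_self' (fun _ _ => zero_le) _)
  simp only [lintegral_γ_sq, lintegral_tail_sq] at this
  exact ge_of_tendsto' this fun n => iInf_le _ (Λ n)

-- Jensen's inequality gives `≥` pointwise and reverse martingale convergence gives `≤` for the
-- integrals, so the two sides agree almost everywhere.
theorem ae_iInf_lintegral_sq_le_tailKernel_sq (hγ : IsRandomSpecification γ)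
    (hμ : ∀ᵐ ξ ∂P, μ ξ ∈ Gibbs (γ ξ)) (hA : MeasurableSet A) :
    ∀ᵐ x ∂(P ⊗ₘ μ), ⨅ Λ, ∫⁻ ω, γ x.1 Λ ω A ^ 2 ∂tailKernel P μ x ≤ tailKernel P μ x A ^ 2 := by
  have jensen : (fun x => tailKernel P μ x A ^ 2) ≤ᵐ[P ⊗ₘ μ]
      fun x => ⨅ Λ, ∫⁻ ω, γ x.1 Λ ω A ^ 2 ∂tailKernel P μ x := by
    filter_upwards [ae_tailKernel_mem_Gibbs hγ hμ] with x hx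
    exact le_iInf fun Λ => sq_apply_le_lintegral_sq_of_mem_Gibbs (hγ.spec x.1) hx Λ hA
  have lintegral_iInf_le : ∫⁻ x, ⨅ Λ, ∫⁻ ω, γ x.1 Λ ω A ^ 2 ∂tailKernel P μ x ∂(P ⊗ₘ μ) ≤
      ∫⁻ x, tailKernel P μ x A ^ 2 ∂(P ⊗ₘ μ) :=
    calc ∫⁻ x, ⨅ Λ, ∫⁻ ω, γ x.1 Λ ω A ^ 2 ∂tailKernel P μ x ∂(P ⊗ₘ μ)
        ≤ ⨅ Λ, ∫⁻ x, ∫⁻ ω, γ x.1 Λ ω A ^ 2 ∂tailKernel P μ x ∂(P ⊗ₘ μ) :=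
          le_iInf fun Λ => lintegral_mono fun x => iInf_le _ Λ
      _ = ⨅ Λ, ∫⁻ x, γ x.1 Λ x.2 A ^ 2 ∂(P ⊗ₘ μ) := iInf_congr fun Λ =>
          lintegral_lintegral_tailKernel ((hγ.jointMeas Λ A hA).pow_const 2)
      _ ≤ ∫⁻ x, tailKernel P μ x A ^ 2 ∂(P ⊗ₘ μ) :=
          iInf_lintegral_sq_le_lintegral_tailKernel_sq hγ hμ hA
  have lintegral_ne_top : ∫⁻ x, tailKernel P μ x A ^ 2 ∂(P ⊗ₘ μ) ≠ ∞ :=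
    lintegral_sq_ne_top_of_le_one fun _ => prob_le_one
  have measurable_sq (Λ : Finset S) :
      Measurable fun p : (H × (S → E)) × (S → E) => γ p.1.1 Λ p.2 A ^ 2 :=
    ((hγ.jointMeas Λ A hA).comp
      ((measurable_fst.comp measurable_fst).prodMk measurable_snd)).pow_const 2
  have measurable_iInf : Measurable fun x => ⨅ Λ, ∫⁻ ω, γ x.1 Λ ω A ^ 2 ∂tailKernel P μ x :=
    .iInf fun Λ => (measurable_sq Λ).lintegral_kernel_prod_right'
  exact (ae_eq_of_ae_le_of_lintegral_le jensen lintegral_ne_top measurable_iInf.aemeasurable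
    lintegral_iInf_le).symm.le

theorem ae_tailKernel_mem_tailTrivialGibbs (hγ : IsRandomSpecification γ)
    (hμ : ∀ᵐ ξ ∂P, μ ξ ∈ Gibbs (γ ξ)) (hC : C.Countable) (hC_meas : ∀ A ∈ C, MeasurableSet A) :
    ∀ᵐ x ∂(P ⊗ₘ μ), tailKernel P μ x ∈ tailTrivialGibbs (γ x.1) C := by
  filter_upwards [ae_tailKernel_mem_Gibbs hγ hμ, (ae_ball_iff hC).2 fun A hA =>
    ae_iInf_lintegral_sq_le_tailKernel_sq hγ hμ (hC_meas A hA)] with x hx_Gibbs hx_trivial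
  exact ⟨hx_Gibbs, hx_trivial⟩

/-- The law of the random measure `tailKernel P μ (ξ, ·)` under `μ ξ`, which decomposes `μ ξ` into
extremal Gibbs measures when `μ ξ` is Gibbs. -/
noncomputable def extremalDecomposition (P : Measure H) [IsFiniteMeasure P]
    (μ : Kernel H (S → E)) [IsFiniteKernel μ] : Kernel H (Measure (S → E)) :=
  (Kernel.id ×ₖ μ).map (tailKernel P μ)

instance [IsMarkovKernel μ] : IsMarkovKernel (extremalDecomposition P μ) :=
  Kernel.IsMarkovKernel.map _ (tailKernel P μ).measurable

theorem extremalDecomposition_apply (ξ : H) :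
    extremalDecomposition P μ ξ = (μ ξ).map fun ω => tailKernel P μ (ξ, ω) := by
  rw [extremalDecomposition, Kernel.map_apply _ (tailKernel P μ).measurable, Kernel.prod_apply,
    Kernel.id_apply, Measure.dirac_prod, Measure.map_map (tailKernel P μ).measurable
    measurable_prodMk_left]
  rfl

theorem join_extremalDecomposition_ae_eq :
    ∀ᵐ ξ ∂P, (extremalDecomposition P μ ξ).join = μ ξ := by
  suffices P ⊗ₘ (tailKernel P μ ∘ₖ (Kernel.id ×ₖ μ)) = P ⊗ₘ μ by
    filter_upwards [Kernel.ae_eq_of_compProd_eq this] with ξ hξ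
    rw [← hξ, Kernel.comp_apply, extremalDecomposition,
      Kernel.map_apply _ (tailKernel P μ).measurable, Measure.bind]
  refine Measure.ext_prod fun {s A} hs hA => ?_
  calc (P ⊗ₘ (tailKernel P μ ∘ₖ (Kernel.id ×ₖ μ))) (s ×ˢ A)
      = ∫⁻ x in s ×ˢ Set.univ, tailKernel P μ x A ∂(P ⊗ₘ μ) := by
        rw [Measure.compProd_apply_prod hs hA,
          Measure.setLIntegral_compProd ((tailKernel P μ).measurable_coe hA) hs .univ]
        simp only [Kernel.comp_apply' _ _ _ hA, Measure.restrict_univ,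
          Kernel.lintegral_id_prod ((tailKernel P μ).measurable_coe hA)]
    _ = ∫⁻ x in s ×ˢ Set.univ, (Prod.snd ⁻¹' A).indicator 1 x ∂(P ⊗ₘ μ) := by
        rw [lintegral_congr_ae (ae_restrict_of_ae (tailKernel_apply_ae_eq_condLExp hA)),
          Set.prod_univ, setLIntegral_condLExp fiberSigma_le _ _ (measurable_fst_fiberSigma hs)]
    _ = (P ⊗ₘ μ) (s ×ˢ A) := by
        rw [lintegral_indicator_one (measurable_snd hA), Measure.restrict_apply (measurable_snd hA),
          ← Set.univ_prod, Set.prod_inter_prod, Set.univ_inter, Set.inter_univ]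

theorem ae_ae_extremalDecomposition_mem_exGibbs (hγ : IsRandomSpecification γ)
    (hμ : ∀ᵐ ξ ∂P, μ ξ ∈ Gibbs (γ ξ)) :
    ∀ᵐ ξ ∂P, ∀ᵐ ν ∂extremalDecomposition P μ ξ, ν ∈ exGibbs (γ ξ) := by
  obtain ⟨C, hC_countable, hC, hgen⟩ := exists_countable_isPiSystem_generateFrom (S → E)
  have hC_meas : ∀ A ∈ C, MeasurableSet A := fun A hA =>
    hgen ▸ MeasurableSpace.measurableSet_generateFrom hA
  filter_upwards [Measure.ae_ae_of_ae_compProd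
    (ae_tailKernel_mem_tailTrivialGibbs hγ hμ hC_countable hC_meas)] with ξ hξ
  have measurable_section : Measurable fun ω => tailKernel P μ (ξ, ω) :=
    (tailKernel P μ).measurable.comp measurable_prodMk_left
  have measurableSet_trivial := measurableSet_tailTrivialGibbs (hγ.spec ξ) hC_countable hC_meas
  rw [extremalDecomposition_apply]
  exact ((ae_map_iff measurable_section.aemeasurable measurableSet_trivial).2 hξ).mono
    fun ν hν => tailTrivialGibbs_subset_exGibbs (hγ.spec ξ) hgen hC hν

end RandomSpecification

/-- **Corollary (decomposition metastate).** For any metastate `κ` there is a metastate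
`κᵉˣ` with the same barycenter which is, for `ℙ`-a.e. `ξ`, supported on the extremal
Gibbs measures `ex 𝒢(γ[ξ])`. -/
theorem decomposition_metastate
    [Countable S] [MeasurableSpace E] [StandardBorelSpace E] [MeasurableSpace H]
    (ℙ : Measure H) [IsProbabilityMeasure ℙ]
    (γ : H → Finset S → (S → E) → Measure (S → E))
    (hγ : IsRandomSpecification γ)
    (hGnonempty : ∀ᵐ ξ ∂ℙ, (Gibbs (γ ξ)).Nonempty)
    (κ : H → Measure (Measure (S → E)))
    (hκ : IsMetastate ℙ γ κ) :
    ∃ κex : H → Measure (Measure (S → E)),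
      IsMetastate ℙ γ κex ∧
      -- (1) same barycenter as `κ`
      (∀ᵐ ξ ∂ℙ, ∀ A : Set (S → E), MeasurableSet A →
        ∫⁻ ν, ν A ∂(κex ξ) = ∫⁻ ν, ν A ∂(κ ξ)) ∧
      -- (2) supported on the extremal Gibbs measures
      (∀ᵐ ξ ∂ℙ, ∃ N : Set (Measure (S → E)), MeasurableSet N ∧ κex ξ N = 0 ∧
        (exGibbs (γ ξ))ᶜ ⊆ N) := by
  simp only [IsMetastate, exists_measurableSet_null_compl_subset_iff] at hκ ⊢
  obtain ⟨hκ_meas, hκ_prob, hκ_Gibbs⟩ := hκ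
  have : Nonempty (S → E) := by
    obtain ⟨ξ, ν, hν, -⟩ := hGnonempty.exists
    exact nonempty_of_isProbabilityMeasure ν
  have barycenter_Gibbs : ∀ᵐ ξ ∂ℙ, (κ ξ).join ∈ Gibbs (γ ξ) :=
    hκ_Gibbs.mono fun ξ hξ => join_mem_Gibbs (hγ.spec ξ) hξ
  obtain ⟨μ, _, hμ⟩ := exists_isMarkovKernel_ae_eq
    (Measure.measurable_join.comp hκ_meas).aemeasurable (barycenter_Gibbs.mono fun ξ hξ => hξ.1)
  have μ_Gibbs : ∀ᵐ ξ ∂ℙ, μ ξ ∈ Gibbs (γ ξ) := by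
    filter_upwards [barycenter_Gibbs, hμ] with ξ hξ hμξ
    exact hμξ ▸ hξ
  have supp_exGibbs := ae_ae_extremalDecomposition_mem_exGibbs hγ μ_Gibbs
  refine ⟨extremalDecomposition ℙ μ, ⟨(extremalDecomposition ℙ μ).measurable, inferInstance,
    supp_exGibbs.mono fun ξ hξ => hξ.mono fun ν hν => hν.1⟩, ?_, supp_exGibbs⟩
  filter_upwards [join_extremalDecomposition_ae_eq (P := ℙ) (μ := μ), hμ] with ξ hξ hμξ A hA
  rw [← Measure.join_apply hA, ← Measure.join_apply hA, hξ, ← hμξ, Function.comp_apply]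

end GibbsMeta
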